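/- There is a universal constant C > 0 such that for all r, d, t ∈ ℕ with 4t ≤ 3^{d−1}, and every function A : P_{r,2d} → ℂ with Â(α) = 0 for all α ∈ Λ_{r,2d} with |α| > t, one has ‖A‖₄ ≤ C^t·‖A‖₂. -/

import Mathlib

open scoped BigOperators

abbrev F3 := ZMod 3
abbrev Pt (r : ℕ) := Fin r → F3
abbrev Fn (r : ℕ) := Pt r → F3

/-- The set of functions `F₃^r → F₃` computed by polynomials of total degree at most `d`
with individual degrees at most `2`. -/
def PolySet (r d : ℕ) : Set (Fn r) :=
  {g | ∃ P : MvPolynomial (Fin r) F3,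
        P.totalDegree ≤ d ∧ (∀ i, P.degreeOf i ≤ 2) ∧
        ∀ x, g x = MvPolynomial.eval x P}

noncomputable def polyFinset (r d : ℕ) : Finset (Fn r) :=
  (Set.toFinite (PolySet r d)).toFinset

/-- Support size `|β|`. -/
def supp {r : ℕ} (β : Fn r) : ℕ := (Finset.univ.filter fun x => β x ≠ 0).card

/-- Dot product `⟨β, f⟩ = Σ_x β(x) f(x)` in `F₃`. -/
def dotF {r : ℕ} (β f : Fn r) : F3 := ∑ x, β x * f x

noncomputable def ω : ℂ := Complex.exp (2 * (Real.pi : ℂ) * Complex.I / 3)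

/-- The character `χ_β(f) = ω^{⟨β,f⟩}`. -/
noncomputable def chi {r : ℕ} (β f : Fn r) : ℂ := ω ^ (dotF β f).val

/-- The dual `S^⊥` of a set of functions. -/
def dualSet (r : ℕ) (S : Set (Fn r)) : Set (Fn r) := {g | ∀ h ∈ S, dotF g h = 0}

/-- `Λ` contains exactly one representative, of minimal support size, from each coset
of `𝔉_r` modulo `P_{r,d}^⊥`. -/
def IsMinRepSet (r d : ℕ) (Λ : Finset (Fn r)) : Prop :=
  (∀ β : Fn r, ∃! β', β' ∈ Λ ∧ β - β' ∈ dualSet r (PolySet r d)) ∧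
  (∀ β' ∈ Λ, ∀ γ : Fn r, β' - γ ∈ dualSet r (PolySet r d) → supp β' ≤ supp γ)

/-- The noise `a·(p² + 1)` (pointwise). -/
def shift {r : ℕ} (p : Fn r) (a : F3) : Fn r := fun x => a * (p x ^ 2 + 1)

/-- Fourier coefficient `Â(β)` of a function on `P_{r,d}`. -/
noncomputable def fourierP (r d : ℕ) (A : Fn r → ℂ) (β : Fn r) : ℂ :=
  (∑ g ∈ polyFinset r d, A g * (starRingEnd ℂ) (chi β g)) / ((polyFinset r d).card : ℂ)

/-- Expectation `E_{f ∈ P_{r,d}}[A(f)]`. -/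
noncomputable def expP (r d : ℕ) (A : Fn r → ℝ) : ℝ :=
  (∑ f ∈ polyFinset r d, A f) / ((polyFinset r d).card : ℝ)

/-- Degree-`k` influence `Inf_x^{≤k}(A)` with respect to a set `Λ` of minimal-support
coset representatives. -/
noncomputable def infP (r d k : ℕ) (Λ : Finset (Fn r)) (A : Fn r → ℝ) (x : Pt r) : ℝ :=
  ∑ β ∈ Λ.filter (fun β => β x ≠ 0 ∧ supp β ≤ k),
    ‖fourierP r d (fun g => (A g : ℂ)) β‖ ^ 2

/-- `L^q` norm `(E_{f ∈ P_{r,d}} |A(f)|^q)^{1/q}`. -/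
noncomputable def normqP (r d : ℕ) (q : ℝ) (A : Fn r → ℂ) : ℝ :=
  ((∑ f ∈ polyFinset r d, ‖A f‖ ^ q) / ((polyFinset r d).card : ℝ)) ^ (1 / q)


/-! ### The additive character of `F₃` -/

lemma om_prim : IsPrimitiveRoot ω 3 := by
  have := Complex.isPrimitiveRoot_exp 3 (by norm_num)
  simpa [ω] using this

/-- The additive character `a ↦ ω^a`. -/
noncomputable def ee (a : F3) : ℂ := ω ^ a.val

lemma ee_add (a b : F3) : ee (a + b) = ee a * ee b := by
  unfold ee
  rw [← pow_add, ZMod.val_add]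
  exact (pow_eq_pow_mod _ om_prim.pow_eq_one).symm

lemma ee_zero : ee 0 = 1 := by simp [ee]

lemma ee_ne_one {a : F3} (h : a ≠ 0) : ee a ≠ 1 := by
  unfold ee
  refine om_prim.pow_ne_one_of_pos_of_lt ?_ (ZMod.val_lt a)
  simpa using h

lemma ee_norm (a : F3) : ‖ee a‖ = 1 := by
  unfold ee
  rw [norm_pow, om_prim.norm'_eq_one (by norm_num), one_pow]

lemma ee_conj (a : F3) : (starRingEnd ℂ) (ee a) = ee (-a) := by
  have h1 : ee a * ee (-a) = 1 := by rw [← ee_add, add_neg_cancel, ee_zero]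
  have h2 : ee a * (starRingEnd ℂ) (ee a) = 1 := by
    rw [Complex.mul_conj, Complex.normSq_eq_norm_sq, ee_norm]; simp
  have h3 : ee a ≠ 0 := by
    intro h; rw [h, zero_mul] at h1; exact zero_ne_one h1
  exact mul_left_cancel₀ h3 (h2.trans h1.symm)

lemma ee_sum : ee 0 + ee 1 + ee 2 = 0 := by
  have h1 : ee 1 * (ee 0 + ee 1 + ee 2) = ee 0 + ee 1 + ee 2 := by
    rw [mul_add, mul_add, ← ee_add, ← ee_add, ← ee_add]
    have a1 : (1 : F3) + 0 = 1 := by decide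
    have a2 : (1 : F3) + 1 = 2 := by decide
    have a3 : (1 : F3) + 2 = 0 := by decide
    rw [a1, a2, a3]; ring
  have h2 : (ee 1 - 1) * (ee 0 + ee 1 + ee 2) = 0 := by linear_combination h1
  rcases mul_eq_zero.1 h2 with h | h
  · exact absurd (sub_eq_zero.1 h) (ee_ne_one (by decide))
  · exact h

lemma f3_sum {M : Type*} [AddCommMonoid M] (G : F3 → M) : ∑ s, G s = G 0 + G 1 + G 2 :=
  Fin.sum_univ_three G

/-! ### Characters on function spaces -/

variable {r : ℕ}

lemma chi_eq (β f : Fn r) : chi β f = ee (dotF β f) := rfl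

lemma dotF_add_right (β f g : Fn r) : dotF β (f + g) = dotF β f + dotF β g := by
  simp [dotF, mul_add, Finset.sum_add_distrib]

lemma dotF_add_left (β γ f : Fn r) : dotF (β + γ) f = dotF β f + dotF γ f := by
  simp [dotF, add_mul, Finset.sum_add_distrib]

lemma dotF_neg_left (β f : Fn r) : dotF (-β) f = - dotF β f := by
  simp [dotF]

lemma dotF_single_left (x : Pt r) (a : F3) (f : Fn r) : dotF (Pi.single x a) f = a * f x := by
  unfold dotF
  rw [Finset.sum_eq_single x]
  · simp
  · intro b _ hb; simp [hb]
  · simp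

lemma dotF_comm (β f : Fn r) : dotF β f = dotF f β := by
  simp [dotF, mul_comm]

lemma chi_add_right (β f g : Fn r) : chi β (f + g) = chi β f * chi β g := by
  simp [chi_eq, dotF_add_right, ee_add]

lemma chi_add_left (β γ f : Fn r) : chi (β + γ) f = chi β f * chi γ f := by
  simp [chi_eq, dotF_add_left, ee_add]

lemma chi_conj (β f : Fn r) : (starRingEnd ℂ) (chi β f) = chi (-β) f := by
  simp [chi_eq, dotF_neg_left, ee_conj]

lemma chi_comm (β f : Fn r) : chi β f = chi f β := by
  simp [chi_eq, dotF_comm]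

lemma sum_chi (Q : Finset (Fn r)) (hadd : ∀ f ∈ Q, ∀ g ∈ Q, f + g ∈ Q) (γ : Fn r) :
    ∑ f ∈ Q, chi γ f = if (∀ h ∈ Q, dotF γ h = 0) then (Q.card : ℂ) else 0 := by
  split_ifs with h
  · rw [Finset.sum_congr rfl (g := fun _ => (1 : ℂ))]
    · simp
    · intro f hf; rw [chi_eq, h f hf, ee_zero]
  · push Not at h
    obtain ⟨h, hh, hne⟩ := h
    have himg : Q.image (fun f => f + h) = Q := by
      apply Finset.eq_of_subset_of_card_le
      · intro g hg
        obtain ⟨f, hf, rfl⟩ := Finset.mem_image.1 hg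
        exact hadd f hf h hh
      · rw [Finset.card_image_of_injective _ (add_left_injective h)]
    have h1 : ∑ f ∈ Q, chi γ f = (∑ f ∈ Q, chi γ f) * chi γ h := by
      conv_lhs => rw [← himg]
      rw [Finset.sum_image (fun a _ b _ hab => add_left_injective h hab), Finset.sum_mul]
      exact Finset.sum_congr rfl fun f _ => chi_add_right γ f h
    have h2 : (∑ f ∈ Q, chi γ f) * (chi γ h - 1) = 0 := by linear_combination -h1
    rcases mul_eq_zero.1 h2 with h | h
    · exact h
    · exact absurd (sub_eq_zero.1 h) (ee_ne_one hne)

lemma sum_chi_univ (γ : Fn r) :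
    ∑ f, chi γ f = if γ = 0 then (Fintype.card (Fn r) : ℂ) else 0 := by
  rw [sum_chi Finset.univ (by simp) γ]
  have : (∀ h ∈ (Finset.univ : Finset (Fn r)), dotF γ h = 0) ↔ γ = 0 := by
    constructor
    · intro h
      funext x
      have := h (Pi.single x 1) (Finset.mem_univ _)
      rw [dotF_comm, dotF_single_left] at this
      simpa using this
    · rintro rfl; simp [dotF]
  simp only [this, Finset.card_univ]

/-! ### Hypercontractivity on the full space -/

lemma ptwise_aux (u g : ℂ) : ‖u + g‖ ^ 4 ≤ ‖u‖ ^ 4 + 3 * ‖g‖ ^ 4 + 8 * (‖u‖ ^ 2 * ‖g‖ ^ 2)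
    + 4 * ‖u‖ ^ 2 * (u.re * g.re + u.im * g.im) := by
  have hs : ∀ z : ℂ, ‖z‖ ^ 2 = z.re ^ 2 + z.im ^ 2 := fun z => by
    rw [← Complex.normSq_eq_norm_sq, Complex.normSq_apply]; ring
  have h4 : ∀ z : ℂ, ‖z‖ ^ 4 = (‖z‖ ^ 2) ^ 2 := fun z => by ring
  have hug : ‖u + g‖ ^ 2 = ‖u‖ ^ 2 + ‖g‖ ^ 2 + 2 * (u.re * g.re + u.im * g.im) := by
    simp only [hs, Complex.add_re, Complex.add_im]; ring
  have hR : (u.re * g.re + u.im * g.im) ^ 2 ≤ ‖u‖ ^ 2 * ‖g‖ ^ 2 := by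
    rw [hs, hs]; nlinarith [sq_nonneg (u.re * g.im - u.im * g.re)]
  rw [h4, h4, h4, hug]
  generalize u.re * g.re + u.im * g.im = R at *
  generalize ‖u‖ ^ 2 = p at *
  generalize ‖g‖ ^ 2 = q at *
  nlinarith [sq_nonneg (q - R)]

lemma ptwise (u v w : ℂ) : ∑ s : F3, ‖u + ee s * v + ee (2 * s) * w‖ ^ 4 ≤
    3 * (‖u‖ ^ 4 + 24 * (‖v‖ ^ 4 + ‖w‖ ^ 4) + 16 * (‖u‖ ^ 2 * ‖v‖ ^ 2 + ‖u‖ ^ 2 * ‖w‖ ^ 2)) := by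
  set g : F3 → ℂ := fun s => ee s * v + ee (2 * s) * w with hg
  have hsum : ∑ s, g s = 0 := by
    have e1 : (2 : F3) * 0 = 0 := by decide
    have e2 : (2 : F3) * 1 = 2 := by decide
    have e3 : (2 : F3) * 2 = 1 := by decide
    rw [f3_sum]
    simp only [hg, e1, e2, e3]
    linear_combination (v + w) * ee_sum
  have hre : ∑ s, (u.re * (g s).re + u.im * (g s).im) = 0 := by
    rw [Finset.sum_add_distrib, ← Finset.mul_sum, ← Finset.mul_sum, ← Complex.re_sum,
      ← Complex.im_sum, hsum]; simp
  have hn : ∀ s, ‖g s‖ ≤ ‖v‖ + ‖w‖ := fun s => by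
    refine (norm_add_le _ _).trans ?_
    simp [ee_norm]
  have hq : ∀ s, ‖g s‖ ^ 2 ≤ 2 * (‖v‖ ^ 2 + ‖w‖ ^ 2) := fun s => by
    have := pow_le_pow_left₀ (norm_nonneg _) (hn s) 2
    nlinarith [sq_nonneg (‖v‖ - ‖w‖)]
  have hq2 : ∀ s, ‖g s‖ ^ 4 ≤ 8 * (‖v‖ ^ 4 + ‖w‖ ^ 4) := fun s => by
    have := pow_le_pow_left₀ (by positivity) (hq s) 2
    nlinarith [sq_nonneg (‖v‖ ^ 2 - ‖w‖ ^ 2)]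
  have key : ∀ s, ‖u + ee s * v + ee (2 * s) * w‖ ^ 4 ≤
      (‖u‖ ^ 4 + 24 * (‖v‖ ^ 4 + ‖w‖ ^ 4) + 16 * (‖u‖ ^ 2 * ‖v‖ ^ 2 + ‖u‖ ^ 2 * ‖w‖ ^ 2))
      + 4 * ‖u‖ ^ 2 * (u.re * (g s).re + u.im * (g s).im) := fun s => by
    have h1 := ptwise_aux u (g s)
    have h2 := mul_le_mul_of_nonneg_left (hq s) (sq_nonneg ‖u‖)
    have h3 := hq2 s
    rw [add_assoc]
    change ‖u + g s‖ ^ 4 ≤ _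
    linarith
  refine (Finset.sum_le_sum fun s _ => key s).trans (le_of_eq ?_)
  rw [Finset.sum_add_distrib, ← Finset.mul_sum, hre]
  simp
  ring

/-- The function with Fourier coefficients `c`. -/
noncomputable def TT (c : Fn r → ℂ) (f : Fn r) : ℂ := ∑ α, c α * chi α f

/-- Restricted coefficients. -/
noncomputable def cc (x : Pt r) (c : Fn r → ℂ) (a : F3) (α : Fn r) : ℂ :=
  if α x = 0 then c (α + Pi.single x a) else 0

lemma sum_split {M : Type*} [AddCommMonoid M] (x : Pt r) (G : Fn r → M) :
    ∑ α, G α = ∑ a : F3, ∑ α : Fn r, if α x = 0 then G (α + Pi.single x a) else 0 := by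
  have h : ∀ a : F3, (∑ α : Fn r, if α x = 0 then G (α + Pi.single x a) else 0)
      = ∑ α : Fn r, if α x = a then G α else 0 := fun a => by
    rw [← Equiv.sum_comp (Equiv.addRight (Pi.single x a : Fn r)) (fun α => if α x = a then G α else 0)]
    refine Finset.sum_congr rfl fun α _ => ?_
    simp
  simp only [h]
  rw [Finset.sum_comm]
  refine Finset.sum_congr rfl fun α _ => ?_
  simp

lemma TT_split (x : Pt r) (c : Fn r → ℂ) (f : Fn r) :
    TT c f = TT (cc x c 0) f + ee (f x) * TT (cc x c 1) f + ee (2 * f x) * TT (cc x c 2) f := by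
  have h : ∀ a : F3, (∑ α : Fn r, if α x = 0 then c (α + Pi.single x a) *
      chi (α + Pi.single x a) f else 0) = ee (a * f x) * TT (cc x c a) f := fun a => by
    unfold TT
    rw [Finset.mul_sum]
    refine Finset.sum_congr rfl fun α _ => ?_
    unfold cc
    split_ifs
    · rw [chi_add_left, chi_eq (Pi.single x a), dotF_single_left]; ring
    · simp
  unfold TT
  rw [sum_split x]
  simp only [h, f3_sum]
  simp [ee_zero, TT]

lemma norm_split (x : Pt r) (c : Fn r → ℂ) :
    ∑ α, ‖c α‖ ^ 2 = ∑ α, ‖cc x c 0 α‖ ^ 2 + ∑ α, ‖cc x c 1 α‖ ^ 2 + ∑ α, ‖cc x c 2 α‖ ^ 2 := by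
  rw [sum_split x, f3_sum]
  unfold cc
  congr 1
  · congr 1 <;>
    · refine Finset.sum_congr rfl fun α _ => ?_
      split_ifs <;> simp
  · refine Finset.sum_congr rfl fun α _ => ?_
    split_ifs <;> simp

lemma TT_inv (x : Pt r) (c : Fn r → ℂ) (a s : F3) (f : Fn r) :
    TT (cc x c a) (f + Pi.single x s) = TT (cc x c a) f := by
  unfold TT
  refine Finset.sum_congr rfl fun α _ => ?_
  unfold cc
  split_ifs with h
  · rw [chi_add_right, chi_eq α (Pi.single x s), dotF_comm α (Pi.single x s), dotF_single_left, h]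
    simp [ee_zero]
  · simp

lemma fourth_step (x : Pt r) (c : Fn r → ℂ) :
    ∑ f, ‖TT c f‖ ^ 4 ≤ ∑ f, (‖TT (cc x c 0) f‖ ^ 4
      + 24 * (‖TT (cc x c 1) f‖ ^ 4 + ‖TT (cc x c 2) f‖ ^ 4)
      + 16 * (‖TT (cc x c 0) f‖ ^ 2 * ‖TT (cc x c 1) f‖ ^ 2
        + ‖TT (cc x c 0) f‖ ^ 2 * ‖TT (cc x c 2) f‖ ^ 2)) := by
  have h1 : 3 * ∑ f, ‖TT c f‖ ^ 4 = ∑ f, ∑ s : F3, ‖TT c (f + (Pi.single x s : Fn r))‖ ^ 4 := by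
    rw [Finset.sum_comm]
    have : ∀ s : F3, ∑ f : Fn r, ‖TT c (f + (Pi.single x s : Fn r))‖ ^ 4
        = ∑ f, ‖TT c f‖ ^ 4 := fun s => by
      generalize (Pi.single x s : Fn r) = g
      exact Equiv.sum_comp (Equiv.addRight g) (fun f => ‖TT c f‖ ^ 4)
    rw [Finset.sum_congr rfl fun s _ => this s, f3_sum]
    ring
  have h2 : ∀ f : Fn r, ∑ s : F3, ‖TT c (f + (Pi.single x s : Fn r))‖ ^ 4 = ∑ s : F3, ‖TT (cc x c 0) f
      + ee s * TT (cc x c 1) f + ee (2 * s) * TT (cc x c 2) f‖ ^ 4 := fun f => by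
    have h0 := Equiv.sum_comp (Equiv.addLeft (f x)) (fun s => ‖TT (cc x c 0) f
      + ee s * TT (cc x c 1) f + ee (2 * s) * TT (cc x c 2) f‖ ^ 4)
    refine Eq.trans ?_ h0
    refine Finset.sum_congr rfl fun s _ => ?_
    rw [TT_split x, TT_inv, TT_inv, TT_inv]
    have hx : (f + (Pi.single x s : Fn r)) x = f x + s := by
      rw [Pi.add_apply, Pi.single_eq_same]
    rw [hx]
    rfl
  have h3 := Finset.sum_le_sum fun (f : Fn r) (_ : f ∈ Finset.univ) =>
    ptwise (TT (cc x c 0) f) (TT (cc x c 1) f) (TT (cc x c 2) f)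
  rw [← Finset.mul_sum] at h3
  simp only [h2] at h1
  linarith

lemma cs_step (p q : Fn r → ℝ) (K M a b : ℝ) (hK : 0 ≤ K) (hM : 0 ≤ M) (ha : 0 ≤ a) (hb : 0 ≤ b)
    (hp : ∑ f, p f ^ 4 ≤ 256 * K * M * a ^ 2) (hq : ∑ f, q f ^ 4 ≤ K * M * b ^ 2) :
    ∑ f, p f ^ 2 * q f ^ 2 ≤ 16 * K * M * a * b := by
  refine (sq_le_sq₀ (Finset.sum_nonneg fun f _ => by positivity) (by positivity)).1 ?_
  refine (Finset.sum_mul_sq_le_sq_mul_sq _ _ _).trans ?_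
  simp only [← pow_mul]
  norm_num only
  refine (mul_le_mul hp hq (Finset.sum_nonneg fun f _ => by positivity) (by positivity)).trans ?_
  apply le_of_eq; ring

theorem hyper (S : Finset (Pt r)) : ∀ (t : ℕ) (c : Fn r → ℂ),
    (∀ α, c α ≠ 0 → (∀ y, α y ≠ 0 → y ∈ S) ∧ supp α ≤ t) →
    ∑ f, ‖TT c f‖ ^ 4 ≤ 256 ^ t * (Fintype.card (Fn r) : ℝ) * (∑ α, ‖c α‖ ^ 2) ^ 2 := by
  induction S using Finset.induction_on with
  | empty =>
    intro t c hc
    have h0 : ∀ α, α ≠ 0 → c α = 0 := fun α hα => by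
      by_contra h
      apply hα
      funext y
      by_contra hy
      exact absurd ((hc α h).1 y hy) (by simp)
    have h1 : ∀ f, TT c f = c 0 := fun f => by
      unfold TT
      rw [Finset.sum_eq_single 0]
      · simp [chi_eq, dotF, ee_zero]
      · intro b _ hb; simp [h0 b hb]
      · simp
    have h2 : ∑ α, ‖c α‖ ^ 2 = ‖c 0‖ ^ 2 := by
      rw [Finset.sum_eq_single 0]
      · intro b _ hb; simp [h0 b hb]
      · simp
    simp only [h1, h2, Finset.sum_const, Finset.card_univ, nsmul_eq_mul]
    have : (1 : ℝ) ≤ 256 ^ t := one_le_pow₀ (by norm_num)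
    have h3 : 0 ≤ (Fintype.card (Fn r) : ℝ) * ‖c 0‖ ^ 4 := by positivity
    nlinarith
  | insert x S hx ih =>
    intro t c hc
    rcases t with _ | n
    · apply ih
      intro α hα
      refine ⟨fun y hy => ?_, (hc α hα).2⟩
      have := (hc α hα).2
      have h2 : 0 < supp α := Finset.card_pos.2 ⟨y, by simp [hy]⟩
      omega
    · have hS : ∀ a α, cc x c a α ≠ 0 → α x = 0 ∧ c (α + Pi.single x a) ≠ 0 := fun a α h => by
        unfold cc at h
        split_ifs at h with h1
        · exact ⟨h1, h⟩
        · exact absurd rfl h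
      have hsub : ∀ a α, cc x c a α ≠ 0 → ∀ y, α y ≠ 0 → y ∈ S := fun a α h y hy => by
        obtain ⟨h1, h2⟩ := hS a α h
        have hyx : y ≠ x := fun e => hy (e ▸ h1)
        have := (hc _ h2).1 y (by simpa [hyx] using hy)
        exact Finset.mem_of_mem_insert_of_ne this hyx
      have I0 := ih (n + 1) (cc x c 0) fun α h => ⟨hsub 0 α h, by
        simpa using (hc _ (hS 0 α h).2).2⟩
      have hcard : ∀ a : F3, a ≠ 0 → ∀ α, cc x c a α ≠ 0 → supp α ≤ n := fun a ha α h => by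
        obtain ⟨h1, h2⟩ := hS a α h
        have h3 := (hc _ h2).2
        have h4 : supp α < supp (α + Pi.single x a) := by
          apply Finset.card_lt_card
          rw [Finset.ssubset_iff_of_subset]
          · exact ⟨x, by simp [h1, ha], by simp [h1]⟩
          · intro y
            simp only [Finset.mem_filter, Finset.mem_univ, true_and]
            intro hy
            have hyx : y ≠ x := fun e => hy (e ▸ h1)
            simpa [hyx] using hy
        omega
      have I1 := ih n (cc x c 1) fun α h => ⟨hsub 1 α h, hcard 1 (by decide) α h⟩
      have I2 := ih n (cc x c 2) fun α h => ⟨hsub 2 α h, hcard 2 (by decide) α h⟩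
      have F := fourth_step x c
      rw [norm_split x c]
      have p0 : 0 ≤ ∑ α, ‖cc x c 0 α‖ ^ 2 := Finset.sum_nonneg fun _ _ => by positivity
      have p1 : 0 ≤ ∑ α, ‖cc x c 1 α‖ ^ 2 := Finset.sum_nonneg fun _ _ => by positivity
      have p2 : 0 ≤ ∑ α, ‖cc x c 2 α‖ ^ 2 := Finset.sum_nonneg fun _ _ => by positivity
      have pM : (0 : ℝ) ≤ (Fintype.card (Fn r) : ℝ) := by positivity
      have pK : (0 : ℝ) ≤ 256 ^ n := by positivity
      have hpow : (256 : ℝ) ^ (n + 1) = 256 * 256 ^ n := by ring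
      rw [hpow] at I0 ⊢
      have C1 := cs_step _ _ _ _ _ _ pK pM p0 p1 I0 I1
      have C2 := cs_step _ _ _ _ _ _ pK pM p0 p2 I0 I2
      simp only [Finset.sum_add_distrib, ← Finset.mul_sum] at F
      generalize ∑ α, ‖cc x c 0 α‖ ^ 2 = a0 at *
      generalize ∑ α, ‖cc x c 1 α‖ ^ 2 = a1 at *
      generalize ∑ α, ‖cc x c 2 α‖ ^ 2 = a2 at *
      generalize (Fintype.card (Fn r) : ℝ) = M at *
      generalize (256 : ℝ) ^ n = K at *
      have hKM : 0 ≤ K * M := mul_nonneg pK pM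
      have e1 : 0 ≤ K * M * a1 ^ 2 := by positivity
      have e2 : 0 ≤ K * M * a2 ^ 2 := by positivity
      have e3 : 0 ≤ K * M * (a0 * a1) := by positivity
      have e4 : 0 ≤ K * M * (a0 * a2) := by positivity
      have e5 : 0 ≤ K * M * (a1 * a2) := by positivity
      nlinarith

/-! ### Separating polynomials and the dual distance -/

lemma count_lin (v : Pt r) (hv : v ≠ 0) :
    3 * (Finset.univ.filter fun l : Pt r => ∑ i, l i * v i = 0).card = Fintype.card (Pt r) := by
  obtain ⟨i, hi⟩ : ∃ i, v i ≠ 0 := by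
    by_contra h; push Not at h; exact hv (funext h)
  rw [Finset.card_filter]
  have h : ∀ s : F3, (∑ l : Pt r, if ∑ j, l j * v j = 0 then 1 else 0)
      = ∑ l : Pt r, if ∑ j, l j * v j + s = 0 then 1 else 0 := fun s => by
    rw [← Equiv.sum_comp (Equiv.addRight (Pi.single i (s / v i) : Pt r))
      (fun l : Pt r => if ∑ j, l j * v j = 0 then 1 else 0)]
    refine Finset.sum_congr rfl fun l _ => ?_
    have : ∑ j, (l + Pi.single i (s / v i) : Pt r) j * v j = ∑ j, l j * v j + s := by
      simp only [Pi.add_apply, add_mul, Finset.sum_add_distrib]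
      congr 1
      rw [Finset.sum_eq_single i]
      · simp [div_mul_cancel₀ s hi]
      · intro b _ hb; simp [hb]
      · simp
    simp only [Equiv.coe_addRight, this]
  have h2 : 3 * (∑ l : Pt r, if ∑ j, l j * v j = 0 then 1 else 0)
      = ∑ s : F3, ∑ l : Pt r, if ∑ j, l j * v j + s = 0 then 1 else 0 := by
    simp only [← h]
    simp
  rw [h2, Finset.sum_comm]
  have h3 : ∀ l : Pt r, (∑ s : F3, if ∑ j, l j * v j + s = 0 then 1 else 0) = 1 := fun l => by
    simp [add_eq_zero_iff_neg_eq]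
  simp only [h3]
  simp

lemma exists_lin (x0 : Pt r) (S : Finset (Pt r)) (hx : x0 ∉ S) :
    ∃ l : Pt r, 3 * (S.filter fun y => ∑ i, l i * (y i - x0 i) = 0).card ≤ S.card := by
  by_contra h
  push Not at h
  have h1 : ∑ l : Pt r, S.card < ∑ l : Pt r,
      3 * (S.filter fun y => ∑ i, l i * (y i - x0 i) = 0).card :=
    Finset.sum_lt_sum_of_nonempty Finset.univ_nonempty fun l _ => h l
  have h2 : ∑ l : Pt r, 3 * (S.filter fun y => ∑ i, l i * (y i - x0 i) = 0).card
      = ∑ l : Pt r, S.card := by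
    rw [← Finset.mul_sum]
    simp only [Finset.card_filter]
    rw [Finset.sum_comm, Finset.mul_sum]
    have : ∀ y ∈ S, (3 * ∑ l : Pt r, if ∑ i, l i * (y i - x0 i) = 0 then 1 else 0)
        = Fintype.card (Pt r) := fun y hy => by
      rw [← Finset.card_filter]
      exact count_lin (y - x0) (sub_ne_zero.2 fun e => hx (e ▸ hy))
    rw [Finset.sum_congr rfl this]
    simp only [Finset.sum_const, smul_eq_mul, Finset.card_univ]
    ring
  omega

lemma exists_sep (x0 : Pt r) : ∀ (d : ℕ) (S : Finset (Pt r)), x0 ∉ S → S.card < 3 ^ d →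
    ∃ Q : MvPolynomial (Fin r) F3, Q.totalDegree ≤ 2 * d ∧ MvPolynomial.eval x0 Q ≠ 0 ∧
      ∀ y ∈ S, MvPolynomial.eval y Q = 0 := by
  intro d
  induction d with
  | zero =>
    intro S _ hS
    have : S = ∅ := by simpa using hS
    subst this
    exact ⟨1, by simp, by simp, by simp⟩
  | succ d ih =>
    intro S hx hS
    obtain ⟨l, hl⟩ := exists_lin x0 S hx
    obtain ⟨Q, h1, h2, h3⟩ := ih (S.filter fun y => ∑ i, l i * (y i - x0 i) = 0)
      (fun h => hx (Finset.mem_filter.1 h).1) (by rw [pow_succ] at hS; omega)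
    let L : MvPolynomial (Fin r) F3 :=
      ∑ i, MvPolynomial.C (l i) * (MvPolynomial.X i - MvPolynomial.C (x0 i))
    have hL : ∀ y, MvPolynomial.eval y L = ∑ i, l i * (y i - x0 i) := fun y => by
      simp [L]
    have hdeg : L.totalDegree ≤ 1 := by
      refine MvPolynomial.totalDegree_finsetSum_le fun i _ => ?_
      refine (MvPolynomial.totalDegree_mul _ _).trans ?_
      rw [MvPolynomial.totalDegree_C, zero_add]
      refine (MvPolynomial.totalDegree_sub_C_le _ _).trans ?_
      simp
    refine ⟨Q * (1 - L ^ 2), ?_, ?_, ?_⟩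
    · refine (MvPolynomial.totalDegree_mul _ _).trans ?_
      have : (1 - L ^ 2).totalDegree ≤ 2 := by
        refine (MvPolynomial.totalDegree_sub _ _).trans ?_
        have := MvPolynomial.totalDegree_pow L 2
        simp only [MvPolynomial.totalDegree_one]
        omega
      omega
    · simp [hL, h2]
    · intro y hy
      by_cases h : ∑ i, l i * (y i - x0 i) = 0
      · simp [h3 y (Finset.mem_filter.2 ⟨hy, h⟩)]
      · have hsq : ∀ a : F3, a ≠ 0 → 1 - a ^ 2 = 0 := by decide
        simp [hL, hsq _ h]

/-- Exponent reduction. -/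
def red (n : ℕ) : ℕ := if n ≤ 2 then n else if n % 2 = 0 then 2 else 1

lemma red_le (n : ℕ) : red n ≤ n := by unfold red; split_ifs <;> omega

lemma red_le_two (n : ℕ) : red n ≤ 2 := by unfold red; split_ifs <;> omega

lemma pow_red (a : F3) (n : ℕ) : a ^ red n = a ^ n := by
  unfold red
  split_ifs with h1 h2
  · rfl
  · obtain ⟨k, rfl⟩ : ∃ k, n = 2 * (k + 1) := ⟨n / 2 - 1, by omega⟩
    rw [pow_mul]
    have : ∀ a : F3, a ^ 2 = 0 ∨ a ^ 2 = 1 := by decide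
    rcases this a with h | h <;> simp [h]
  · obtain ⟨k, rfl⟩ : ∃ k, n = 2 * (k + 1) + 1 := ⟨n / 2 - 1, by omega⟩
    rw [pow_succ _ (2 * (k + 1)), pow_mul, pow_one]
    have : ∀ a : F3, a = 0 ∨ a ^ 2 = 1 := by decide
    rcases this a with h | h <;> simp [h]

lemma mem_PolySet_of_eval (D : ℕ) (Q : MvPolynomial (Fin r) F3) (hQ : Q.totalDegree ≤ D) :
    (fun x => MvPolynomial.eval x Q) ∈ PolySet r D := by
  have hred0 : red 0 = 0 := rfl
  refine ⟨∑ m ∈ Q.support, MvPolynomial.monomial (m.mapRange red hred0) (Q.coeff m), ?_, ?_, ?_⟩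
  · refine MvPolynomial.totalDegree_finsetSum_le fun m hm => ?_
    refine (MvPolynomial.totalDegree_monomial_le _ _).trans ?_
    refine le_trans ?_ ((MvPolynomial.le_totalDegree hm).trans hQ)
    rw [Finsupp.sum_fintype _ _ (by simp), Finsupp.sum_fintype _ _ (by simp)]
    exact Finset.sum_le_sum fun i _ => by simpa using red_le (m i)
  · intro i
    refine (MvPolynomial.degreeOf_sum_le i _ _).trans ?_
    refine Finset.sup_le fun m hm => ?_
    rw [MvPolynomial.degreeOf_monomial_eq _ _ (MvPolynomial.mem_support_iff.1 hm)]
    simpa using red_le_two (m i)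
  · intro x
    rw [map_sum]
    change MvPolynomial.eval x Q = _
    rw [MvPolynomial.eval_eq']
    refine Finset.sum_congr rfl fun m _ => ?_
    rw [MvPolynomial.eval_monomial, Finsupp.prod_fintype _ _ (by simp)]
    congr 1
    exact Finset.prod_congr rfl fun i _ => by simp [pow_red]

lemma PolySet_add {D : ℕ} {f g : Fn r} (hf : f ∈ PolySet r D) (hg : g ∈ PolySet r D) :
    f + g ∈ PolySet r D := by
  obtain ⟨P, hP, _, hP3⟩ := hf
  obtain ⟨Q, hQ, _, hQ3⟩ := hg
  have := mem_PolySet_of_eval D (P + Q) ((MvPolynomial.totalDegree_add _ _).trans (max_le hP hQ))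
  convert this using 1
  funext x
  simp [hP3, hQ3]

lemma PolySet_zero (D : ℕ) : (0 : Fn r) ∈ PolySet r D := by
  have := mem_PolySet_of_eval (r := r) D 0 (by simp)
  convert this using 1
  funext x
  simp

lemma dual_small {d : ℕ} {β : Fn r} (hβ : β ∈ dualSet r (PolySet r (2 * d)))
    (hs : supp β ≤ 3 ^ d) : β = 0 := by
  by_contra hne
  obtain ⟨x0, hx0⟩ : ∃ x, β x ≠ 0 := by
    by_contra h; push Not at h; exact hne (funext h)
  have hmem : x0 ∈ Finset.univ.filter (fun x => β x ≠ 0) := by simp [hx0]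
  obtain ⟨Q, h1, h2, h3⟩ := exists_sep x0 d ((Finset.univ.filter fun x => β x ≠ 0).erase x0)
    (by simp) ((Finset.card_erase_lt_of_mem hmem).trans_le hs)
  have := hβ _ (mem_PolySet_of_eval _ Q h1)
  unfold dotF at this
  rw [Finset.sum_eq_single x0] at this
  · exact (mul_ne_zero hx0 h2) this
  · intro y _ hy
    by_cases hb : β y = 0
    · simp [hb]
    · simp [h3 y (Finset.mem_erase.2 ⟨hy, by simp [hb]⟩)]
  · simp

/-! ### Transfer to `P_{r,2d}` -/

lemma fourth_expand (Q : Finset (Fn r)) (c : Fn r → ℂ) :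
    ((∑ f ∈ Q, ‖TT c f‖ ^ 4 : ℝ) : ℂ) = ∑ α, ∑ β, ∑ γ, ∑ δ,
      c α * c β * (starRingEnd ℂ) (c γ) * (starRingEnd ℂ) (c δ)
        * ∑ f ∈ Q, chi (α + β + -γ + -δ) f := by
  have h1 : ∀ f, ((‖TT c f‖ ^ 4 : ℝ) : ℂ) = ∑ α, ∑ β, ∑ γ, ∑ δ,
      (c α * chi α f) * ((c β * chi β f) * (((starRingEnd ℂ) (c γ) * chi (-γ) f) *
        ((starRingEnd ℂ) (c δ) * chi (-δ) f))) := fun f => by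
    have h2 : ((‖TT c f‖ ^ 4 : ℝ) : ℂ)
        = TT c f * (TT c f * ((starRingEnd ℂ) (TT c f) * (starRingEnd ℂ) (TT c f))) := by
      have := Complex.mul_conj' (TT c f)
      push_cast
      linear_combination (-(TT c f * (starRingEnd ℂ) (TT c f)) - (‖TT c f‖ : ℂ) ^ 2) * this
    have h3 : (starRingEnd ℂ) (TT c f) = ∑ γ, (starRingEnd ℂ) (c γ) * chi (-γ) f := by
      simp [TT, map_sum, chi_conj]
    rw [h2, h3]
    simp only [← Finset.mul_sum, ← Finset.sum_mul]
    rfl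
  rw [Complex.ofReal_sum]
  simp only [h1]
  rw [Finset.sum_comm]
  refine Finset.sum_congr rfl fun α _ => ?_
  rw [Finset.sum_comm]
  refine Finset.sum_congr rfl fun β _ => ?_
  rw [Finset.sum_comm]
  refine Finset.sum_congr rfl fun γ _ => ?_
  rw [Finset.sum_comm]
  refine Finset.sum_congr rfl fun δ _ => ?_
  rw [Finset.mul_sum]
  refine Finset.sum_congr rfl fun f _ => ?_
  simp only [chi_add_left]
  ring

lemma second_expand (Q : Finset (Fn r)) (c : Fn r → ℂ) :
    ((∑ f ∈ Q, ‖TT c f‖ ^ 2 : ℝ) : ℂ) = ∑ α, ∑ β,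
      c α * (starRingEnd ℂ) (c β) * ∑ f ∈ Q, chi (α + -β) f := by
  have h1 : ∀ f, ((‖TT c f‖ ^ 2 : ℝ) : ℂ) = ∑ α, ∑ β,
      (c α * chi α f) * ((starRingEnd ℂ) (c β) * chi (-β) f) := fun f => by
    have h3 : (starRingEnd ℂ) (TT c f) = ∑ γ, (starRingEnd ℂ) (c γ) * chi (-γ) f := by
      simp [TT, map_sum, chi_conj]
    rw [Complex.ofReal_pow, ← Complex.mul_conj' (TT c f), h3]
    simp only [← Finset.mul_sum, ← Finset.sum_mul]
    rfl
  rw [Complex.ofReal_sum]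
  simp only [h1]
  rw [Finset.sum_comm]
  refine Finset.sum_congr rfl fun α _ => ?_
  rw [Finset.sum_comm]
  refine Finset.sum_congr rfl fun β _ => ?_
  rw [Finset.mul_sum]
  refine Finset.sum_congr rfl fun f _ => ?_
  simp only [chi_add_left]
  ring

lemma mem_polyFinset {D : ℕ} {f : Fn r} : f ∈ polyFinset r D ↔ f ∈ PolySet r D := by
  simp [polyFinset]

open Classical in
lemma sum_chi_poly (D : ℕ) (γ : Fn r) : ∑ f ∈ polyFinset r D, chi γ f
    = if γ ∈ dualSet r (PolySet r D) then ((polyFinset r D).card : ℂ) else 0 := by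
  rw [sum_chi _ (fun f hf g hg => mem_polyFinset.2
    (PolySet_add (mem_polyFinset.1 hf) (mem_polyFinset.1 hg)))]
  simp only [mem_polyFinset, dualSet, Set.mem_ofPred_eq]
  congr

lemma supp_add (α β : Fn r) : supp (α + β) ≤ supp α + supp β := by
  unfold supp
  refine le_trans (Finset.card_le_card ?_) (Finset.card_union_le _ _)
  intro x
  simp only [Finset.mem_filter, Finset.mem_univ, true_and, Finset.mem_union, Pi.add_apply]
  intro h
  by_contra hh
  push Not at hh
  exact h (by simp [hh.1, hh.2])

lemma supp_neg (α : Fn r) : supp (-α) = supp α := by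
  simp [supp]

lemma fourth_transfer (d t : ℕ) (ht : 4 * t ≤ 3 ^ d) (c : Fn r → ℂ)
    (hc : ∀ α, c α ≠ 0 → supp α ≤ t) :
    (Fintype.card (Fn r) : ℝ) * ∑ f ∈ polyFinset r (2 * d), ‖TT c f‖ ^ 4
      = ((polyFinset r (2 * d)).card : ℝ) * ∑ f, ‖TT c f‖ ^ 4 := by
  have : (((Fintype.card (Fn r) : ℝ) * ∑ f ∈ polyFinset r (2 * d), ‖TT c f‖ ^ 4 : ℝ) : ℂ)
      = ((((polyFinset r (2 * d)).card : ℝ) * ∑ f, ‖TT c f‖ ^ 4 : ℝ) : ℂ) := by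
    rw [Complex.ofReal_mul, Complex.ofReal_mul, fourth_expand, fourth_expand]
    simp only [Finset.mul_sum (Finset.univ : Finset (Fn r)) _ ((Fintype.card (Fn r) : ℝ) : ℂ),
      Finset.mul_sum (Finset.univ : Finset (Fn r)) _ (((polyFinset r (2 * d)).card : ℝ) : ℂ)]
    refine Finset.sum_congr rfl fun α _ => Finset.sum_congr rfl fun β _ =>
      Finset.sum_congr rfl fun γ _ => Finset.sum_congr rfl fun δ _ => ?_
    by_cases h1 : c α = 0
    · simp [h1]
    by_cases h2 : c β = 0
    · simp [h2]
    by_cases h3 : c γ = 0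
    · simp [h3]
    by_cases h4 : c δ = 0
    · simp [h4]
    have hs : supp (α + β + -γ + -δ) ≤ 3 ^ d := by
      have a1 := supp_add (α + β + -γ) (-δ)
      have a2 := supp_add (α + β) (-γ)
      have a3 := supp_add α β
      rw [supp_neg] at a1 a2
      have := hc α h1
      have := hc β h2
      have := hc γ h3
      have := hc δ h4
      omega
    have hiff : α + β + -γ + -δ ∈ dualSet r (PolySet r (2 * d)) ↔ α + β + -γ + -δ = 0 :=
      ⟨fun h => dual_small h hs, fun h => by rw [h]; intro g _; simp [dotF]⟩
    classical
    rw [sum_chi_poly, sum_chi_univ]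
    simp only [hiff]
    push_cast
    split_ifs <;> ring
  exact_mod_cast this

lemma second_transfer (D : ℕ) (Λ : Finset (Fn r)) (hΛ : IsMinRepSet r D Λ) (c : Fn r → ℂ)
    (hc : ∀ α, c α ≠ 0 → α ∈ Λ) :
    ∑ f ∈ polyFinset r D, ‖TT c f‖ ^ 2 = ((polyFinset r D).card : ℝ) * ∑ α, ‖c α‖ ^ 2 := by
  have : ((∑ f ∈ polyFinset r D, ‖TT c f‖ ^ 2 : ℝ) : ℂ)
      = ((((polyFinset r D).card : ℝ) * ∑ α, ‖c α‖ ^ 2 : ℝ) : ℂ) := by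
    rw [second_expand, Complex.ofReal_mul, Complex.ofReal_sum, Finset.mul_sum]
    refine Finset.sum_congr rfl fun α _ => ?_
    classical
    rw [Finset.sum_eq_single α]
    · rw [sum_chi_poly, if_pos (by rw [add_neg_cancel]; intro g _; simp [dotF]),
        Complex.mul_conj']
      push_cast
      ring
    · intro β _ hβ
      by_cases h1 : c α = 0
      · simp [h1]
      by_cases h2 : c β = 0
      · simp [h2]
      rw [sum_chi_poly, if_neg, mul_zero]
      intro hd
      apply hβ
      exact (hΛ.1 α).unique ⟨hc β h2, by simpa [sub_eq_add_neg] using hd⟩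
        ⟨hc α h1, by rw [sub_self]; intro g _; simp [dotF]⟩
    · simp
  exact_mod_cast this

lemma chi_congr {D : ℕ} {α β f : Fn r} (h : α - β ∈ dualSet r (PolySet r D))
    (hf : f ∈ polyFinset r D) : chi α f = chi β f := by
  have h1 := h f (mem_polyFinset.1 hf)
  have h2 : α = (α - β) + β := by abel
  rw [h2, chi_add_left, chi_eq (α - β), h1, ee_zero, one_mul]

lemma inversion (D : ℕ) (Λ : Finset (Fn r)) (hΛ : IsMinRepSet r D Λ) (A : Fn r → ℂ) :
    ∃ c : Fn r → ℂ, (∀ α, c α ≠ 0 → α ∈ Λ ∧ fourierP r D A α ≠ 0) ∧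
      ∀ f ∈ polyFinset r D, A f = TT c f := by
  classical
  choose rep hrep _ using hΛ.1
  have hP : ((polyFinset r D).card : ℂ) ≠ 0 := by
    have : 0 < (polyFinset r D).card :=
      Finset.card_pos.2 ⟨0, mem_polyFinset.2 (PolySet_zero D)⟩
    exact_mod_cast this.ne'
  have hM : (Fintype.card (Fn r) : ℂ) ≠ 0 := by
    exact_mod_cast Fintype.card_ne_zero
  refine ⟨fun α => if α ∈ Λ then ((Finset.univ.filter fun β => rep β = α).card : ℂ) *
    ((polyFinset r D).card : ℂ) / (Fintype.card (Fn r) : ℂ) * fourierP r D A α else 0, ?_, ?_⟩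
  · intro α h
    dsimp only at h
    split_ifs at h with h1
    · exact ⟨h1, fun e => h (by rw [e, mul_zero])⟩
    · exact absurd rfl h
  · intro f hf
    have e1 : ∑ β, fourierP r D A β * chi β f
        = (Fintype.card (Fn r) : ℂ) / ((polyFinset r D).card : ℂ) * A f := by
      have s1 : ∀ β : Fn r, fourierP r D A β * chi β f = ∑ g ∈ polyFinset r D,
          A g / ((polyFinset r D).card : ℂ) * chi (f + -g) β := fun β => by
        unfold fourierP
        rw [div_mul_eq_mul_div, Finset.sum_mul, Finset.sum_div]
        refine Finset.sum_congr rfl fun g _ => ?_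
        rw [chi_add_left, ← chi_conj, chi_comm f β, chi_comm g β]
        ring
      simp only [s1]
      rw [Finset.sum_comm]
      simp only [← Finset.mul_sum, sum_chi_univ]
      rw [Finset.sum_eq_single f]
      · rw [add_neg_cancel, if_pos rfl]; ring
      · intro g _ hg
        rw [if_neg, mul_zero]
        intro h
        exact hg (add_neg_eq_zero.1 h).symm
      · intro h; exact absurd hf h
    have e2 : ∑ β, fourierP r D A β * chi β f = ∑ α ∈ Λ,
        ((Finset.univ.filter fun β => rep β = α).card : ℂ) * (fourierP r D A α * chi α f) := by
      rw [← Finset.sum_fiberwise_of_maps_to (s := Finset.univ) (t := Λ) (g := rep)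
        (fun β _ => (hrep β).1)]
      refine Finset.sum_congr rfl fun α _ => ?_
      rw [Finset.sum_congr rfl (g := fun _ => fourierP r D A α * chi α f)]
      · simp
      · intro β hβ
        have hb : rep β = α := (Finset.mem_filter.1 hβ).2
        have hd := (hrep β).2
        rw [hb] at hd
        rw [chi_congr hd hf]
        congr 1
        unfold fourierP
        congr 1
        refine Finset.sum_congr rfl fun g hg => ?_
        rw [chi_congr hd hg]
    have e3 : A f = ((polyFinset r D).card : ℂ) / (Fintype.card (Fn r) : ℂ) *
        ∑ α ∈ Λ, ((Finset.univ.filter fun β => rep β = α).card : ℂ) *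
          (fourierP r D A α * chi α f) := by
      rw [← e2, e1]; field_simp
    rw [e3]
    unfold TT
    simp only [ite_mul, zero_mul]
    rw [← Finset.sum_filter, Finset.mul_sum]
    refine Finset.sum_congr (by ext; simp) fun α _ => ?_
    ring

/-- Hypercontractivity over `P_{r,2d}` (Lemma 3.4): there is a universal `C > 0` such that
for `4t ≤ 3^{d−1}` and any function on `P_{r,2d}` with Fourier support (w.r.t. any
minimal-support representatives `Λ`) on levels at most `t`, `‖A‖₄ ≤ C^t ‖A‖₂`. -/
theorem stmt13 :
    ∃ C : ℝ, 0 < C ∧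
      ∀ r d t : ℕ, (4 * t : ℝ) ≤ (3 : ℝ) ^ ((d : ℝ) - 1) →
        ∀ Λ : Finset (Fn r), IsMinRepSet r (2 * d) Λ →
          ∀ A : Fn r → ℂ,
            (∀ α ∈ Λ, t < supp α → fourierP r (2 * d) A α = 0) →
            normqP r (2 * d) 4 A ≤ C ^ t * normqP r (2 * d) 2 A := by
  refine ⟨4, by norm_num, ?_⟩
  intro r d t ht Λ hΛ A hA
  have ht' : 4 * t ≤ 3 ^ d := by
    have h1 : (3 : ℝ) ^ ((d : ℝ) - 1) ≤ (3 : ℝ) ^ (d : ℝ) :=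
      Real.rpow_le_rpow_of_exponent_le (by norm_num) (by linarith)
    rw [Real.rpow_natCast] at h1
    exact_mod_cast ht.trans h1
  obtain ⟨c, hc, hAc⟩ := inversion (2 * d) Λ hΛ A
  have hct : ∀ α, c α ≠ 0 → supp α ≤ t := fun α h => by
    by_contra hlt
    exact (hc α h).2 (hA α (hc α h).1 (not_le.1 hlt))
  have H := hyper Finset.univ t c fun α h => ⟨fun y _ => Finset.mem_univ y, hct α h⟩
  have H4 := fourth_transfer d t ht' c hct
  have H2 := second_transfer (2 * d) Λ hΛ c fun α h => (hc α h).1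
  have hP : (0 : ℝ) < ((polyFinset r (2 * d)).card : ℝ) := by
    have : 0 < (polyFinset r (2 * d)).card :=
      Finset.card_pos.2 ⟨0, mem_polyFinset.2 (PolySet_zero _)⟩
    exact_mod_cast this
  have hM : (0 : ℝ) < (Fintype.card (Fn r) : ℝ) := by
    exact_mod_cast Fintype.card_pos
  have E4 : ∑ f ∈ polyFinset r (2 * d), ‖A f‖ ^ (4 : ℝ)
      = ∑ f ∈ polyFinset r (2 * d), ‖TT c f‖ ^ 4 :=
    Finset.sum_congr rfl fun f hf => by
      rw [hAc f hf]; exact Real.rpow_natCast _ 4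
  have E2 : ∑ f ∈ polyFinset r (2 * d), ‖A f‖ ^ (2 : ℝ)
      = ∑ f ∈ polyFinset r (2 * d), ‖TT c f‖ ^ 2 :=
    Finset.sum_congr rfl fun f hf => by
      rw [hAc f hf]; exact Real.rpow_natCast _ 2
  unfold normqP
  rw [E4, E2, H2, mul_div_cancel_left₀ _ hP.ne']
  have hN : 0 ≤ ∑ α, ‖c α‖ ^ 2 := Finset.sum_nonneg fun _ _ => by positivity
  have key : (∑ f ∈ polyFinset r (2 * d), ‖TT c f‖ ^ 4) / ((polyFinset r (2 * d)).card : ℝ)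
      ≤ 256 ^ t * (∑ α, ‖c α‖ ^ 2) ^ 2 := by
    rw [div_le_iff₀ hP]
    have h1 := mul_le_mul_of_nonneg_left H hP.le
    rw [← H4] at h1
    refine le_of_mul_le_mul_left ?_ hM
    refine h1.trans (le_of_eq ?_)
    ring
  generalize ∑ α, ‖c α‖ ^ 2 = N at *
  have hpow : (256 : ℝ) ^ t * N ^ 2 = (4 ^ t * N ^ (1 / (2 : ℝ))) ^ 4 := by
    have h2 : (N ^ (1 / (2 : ℝ))) ^ 2 = N := by
      rw [← Real.sqrt_eq_rpow, Real.sq_sqrt hN]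
    calc (256 : ℝ) ^ t * N ^ 2 = ((4 : ℝ) ^ 4) ^ t * N ^ 2 := by norm_num
      _ = ((4 : ℝ) ^ t) ^ 4 * ((N ^ (1 / (2 : ℝ))) ^ 2) ^ 2 := by
        rw [h2, ← pow_mul, ← pow_mul, mul_comm 4 t]
      _ = _ := by ring
  rw [hpow] at key
  refine (Real.rpow_le_rpow (div_nonneg (Finset.sum_nonneg fun _ _ => by positivity) hP.le)
    key (by norm_num)).trans (le_of_eq ?_)
  have := Real.pow_rpow_inv_natCast (x := 4 ^ t * N ^ (1 / (2 : ℝ))) (n := 4)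
    (by positivity) (by norm_num)
  have h4 : ((4 : ℕ) : ℝ)⁻¹ = 1 / 4 := by norm_num
  rw [h4] at this
  exact this
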